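/- arXiv:1603.05627 — 3 statements merged into one kernel-verified Lean document; each statement's English description precedes it below -/
import Mathlib

section
/- Consider the SpGEMM instance with I = K = J = 2, S_A = [2]×[2] (a dense matrix), and S_B = {(1,1),(2,2)} (a diagonal matrix), so that V^m = {(1,1,1),(2,1,1),(1,2,2),(2,2,2)}. Then: (a) the partition of V^m into singletons belongs to ((𝒜 ∩ 𝒞) \ ℬ) \ ℛ; (b) the partition whose two parts are {(1,1,1),(2,1,1)} and {(1,2,2),(2,2,2)} (the fibers over pairs (k,j) ∈ S_B) belongs to (𝒜 ∩ ℬ ∩ 𝒞 ∩ ℒ) \ ℛ. -/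
/-- The multiplication set `V^m` of an SpGEMM instance with nonzero
structures `SA` and `SB`: triples `(i,k,j)` with `(i,k) ∈ SA` and `(k,j) ∈ SB`. -/
def Vm (SA SB : Set (ℕ × ℕ)) : Set (ℕ × ℕ × ℕ) :=
  {t | (t.1, t.2.1) ∈ SA ∧ (t.2.1, t.2.2) ∈ SB}

/-- `P` is a partition of the set `X`: its parts are nonempty subsets of `X`,
and every element of `X` lies in exactly one part. -/
def IsPartition {α : Type*} (X : Set α) (P : Set (Set α)) : Prop :=
  (∀ p ∈ P, p ⊆ X ∧ p.Nonempty) ∧ ∀ x ∈ X, ∃! p : Set α, p ∈ P ∧ x ∈ p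

/-- `x` and `y` lie in the same part of `P`. -/
def SamePart {α : Type*} (P : Set (Set α)) (x y : α) : Prop :=
  ∃ p ∈ P, x ∈ p ∧ y ∈ p

/-- `ℱ`: all parallelizations (partitions of `V^m`). -/
def classF (V : Set (ℕ × ℕ × ℕ)) : Set (Set (Set (ℕ × ℕ × ℕ))) :=
  {P | IsPartition V P}

/-- `ℛ`: row-wise parallelizations (equal first coordinate ⇒ same part). -/
def classR (V : Set (ℕ × ℕ × ℕ)) : Set (Set (Set (ℕ × ℕ × ℕ))) :=
  {P ∈ classF V | ∀ x ∈ V, ∀ y ∈ V, x.1 = y.1 → SamePart P x y}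

/-- `ℒ`: column-wise parallelizations (equal third coordinate ⇒ same part). -/
def classL (V : Set (ℕ × ℕ × ℕ)) : Set (Set (Set (ℕ × ℕ × ℕ))) :=
  {P ∈ classF V | ∀ x ∈ V, ∀ y ∈ V, x.2.2 = y.2.2 → SamePart P x y}

/-- `𝒰`: outer-product parallelizations (equal second coordinate ⇒ same part). -/
def classU (V : Set (ℕ × ℕ × ℕ)) : Set (Set (Set (ℕ × ℕ × ℕ))) :=
  {P ∈ classF V | ∀ x ∈ V, ∀ y ∈ V, x.2.1 = y.2.1 → SamePart P x y}

/-- `𝒜`: monochrome-A parallelizations (equal first two coordinates ⇒ same part). -/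
def classA (V : Set (ℕ × ℕ × ℕ)) : Set (Set (Set (ℕ × ℕ × ℕ))) :=
  {P ∈ classF V | ∀ x ∈ V, ∀ y ∈ V, x.1 = y.1 → x.2.1 = y.2.1 → SamePart P x y}

/-- `ℬ`: monochrome-B parallelizations (equal last two coordinates ⇒ same part). -/
def classB (V : Set (ℕ × ℕ × ℕ)) : Set (Set (Set (ℕ × ℕ × ℕ))) :=
  {P ∈ classF V | ∀ x ∈ V, ∀ y ∈ V, x.2 = y.2 → SamePart P x y}

/-- `𝒞`: monochrome-C parallelizations (equal outer coordinates ⇒ same part). -/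
def classC (V : Set (ℕ × ℕ × ℕ)) : Set (Set (Set (ℕ × ℕ × ℕ))) :=
  {P ∈ classF V | ∀ x ∈ V, ∀ y ∈ V, x.1 = y.1 → x.2.2 = y.2.2 → SamePart P x y}

/-! If every row of `B` has at most one nonzero, then `(i, k)` determines the triple `(i, k, j)`, so
the monochrome-A condition is void; likewise monochrome-C when every column has at most one nonzero,
and then also `j` determines `(k, j)`, so column-wise means monochrome-B. For a diagonal `B` it
remains to test the two partitions, which consist of the fibers of `id` and of `(i, k, j) ↦ (k, j)`,
against `ℬ` and `ℛ`. -/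

section FiberPartition

variable {α β γ : Type*} {X : Set α} {x y : α}

/-- The partition of `X` into the fibers of `f`: the common form of the partition into singletons
(`f = id`) and of the one by entries of `B` (`f = Prod.snd`). Only values attained on `X` index a
fiber, so that no part is empty. -/
def fiberPartition (X : Set α) (f : α → β) : Set (Set α) :=
  (fun b => X ∩ f ⁻¹' {b}) '' (f '' X)

theorem isPartition_fiberPartition (X : Set α) (f : α → β) :
    IsPartition X (fiberPartition X f) := by
  refine ⟨?_, fun x hx => ⟨X ∩ f ⁻¹' {f x}, ⟨⟨f x, ⟨x, hx, rfl⟩, rfl⟩, hx, rfl⟩, ?_⟩⟩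
  · rintro _ ⟨_, ⟨x, hx, rfl⟩, rfl⟩
    exact ⟨Set.inter_subset_left, x, hx, rfl⟩
  · rintro _ ⟨⟨b, -, rfl⟩, -, rfl : f x = b⟩
    rfl

theorem samePart_fiberPartition_iff {f : α → β} (hx : x ∈ X) (hy : y ∈ X) :
    SamePart (fiberPartition X f) x y ↔ f x = f y := by
  constructor
  · rintro ⟨_, ⟨b, -, rfl⟩, ⟨-, hxb : f x = b⟩, ⟨-, hyb : f y = b⟩⟩
    exact hxb.trans hyb.symm
  · intro h
    exact ⟨X ∩ f ⁻¹' {f x}, ⟨f x, ⟨x, hx, rfl⟩, rfl⟩, ⟨hx, rfl⟩, hy, h.symm⟩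

theorem forall_samePart_fiberPartition_iff {f : α → β} (g : α → γ) :
    (∀ x ∈ X, ∀ y ∈ X, g x = g y → SamePart (fiberPartition X f) x y) ↔
      ∀ x ∈ X, ∀ y ∈ X, g x = g y → f x = f y :=
  forall₄_congr fun _ hx _ hy => imp_congr_right fun _ => samePart_fiberPartition_iff hx hy

theorem fiberPartition_id (X : Set α) : fiberPartition X id = {p | ∃ x ∈ X, p = {x}} := by
  have fiber_eq : ∀ x ∈ X, X ∩ id ⁻¹' {x} = {x} := fun x hx =>
    Set.inter_eq_right.2 (Set.singleton_subset_iff.2 hx)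
  ext p
  simp only [fiberPartition, Set.image_id, Set.mem_image, Set.mem_ofPred_eq]
  exact exists_congr fun x => and_congr_right fun hx => by rw [fiber_eq x hx, eq_comm]

theorem fiberPartition_prod_snd {s : Set α} (hs : s.Nonempty) (u : Set β) :
    fiberPartition (s ×ˢ u) Prod.snd = (fun b => s ×ˢ {b}) '' u := by
  rw [fiberPartition, Set.snd_image_prod hs]
  refine Set.image_congr fun b hb => ?_
  rw [← Set.univ_prod, Set.prod_inter_prod, Set.inter_univ,
    Set.inter_eq_right.2 (Set.singleton_subset_iff.2 hb)]

theorem IsPartition.samePart_self {P : Set (Set α)} (hP : IsPartition X P) (hx : x ∈ X) :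
    SamePart P x x :=
  let ⟨p, ⟨hp, hxp⟩, _⟩ := hP.2 x hx
  ⟨p, hp, hxp, hxp⟩

end FiberPartition

section Parallelizations

variable {SA SB : Set (ℕ × ℕ)} {V : Set (ℕ × ℕ × ℕ)} {β : Type*} {f : ℕ × ℕ × ℕ → β}

theorem fiberPartition_mem_classB_iff :
    fiberPartition V f ∈ classB V ↔ ∀ x ∈ V, ∀ y ∈ V, x.2 = y.2 → f x = f y :=
  (and_iff_right (isPartition_fiberPartition V f)).trans
    (forall_samePart_fiberPartition_iff Prod.snd)

theorem fiberPartition_mem_classR_iff :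
    fiberPartition V f ∈ classR V ↔ ∀ x ∈ V, ∀ y ∈ V, x.1 = y.1 → f x = f y :=
  (and_iff_right (isPartition_fiberPartition V f)).trans
    (forall_samePart_fiberPartition_iff Prod.fst)

theorem classA_Vm_eq_classF (hrow : Set.InjOn Prod.fst SB) :
    classA (Vm SA SB) = classF (Vm SA SB) := by
  refine Set.Subset.antisymm (fun P hP => hP.1) fun P hP => ⟨hP, fun x hx y hy hi hk => ?_⟩
  obtain rfl : x = y := Prod.ext hi (hrow hx.2 hy.2 hk)
  exact hP.samePart_self hx

theorem classC_Vm_eq_classF (hcol : Set.InjOn Prod.snd SB) :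
    classC (Vm SA SB) = classF (Vm SA SB) := by
  refine Set.Subset.antisymm (fun P hP => hP.1) fun P hP => ⟨hP, fun x hx y hy hi hj => ?_⟩
  obtain rfl : x = y := Prod.ext hi (hcol hx.2 hy.2 hj)
  exact hP.samePart_self hx

theorem classL_Vm_eq_classB (hcol : Set.InjOn Prod.snd SB) :
    classL (Vm SA SB) = classB (Vm SA SB) :=
  Set.Subset.antisymm
    (fun _ hP => ⟨hP.1, fun x hx y hy hkj => hP.2 x hx y hy (congrArg Prod.snd hkj)⟩)
    (fun _ hP => ⟨hP.1, fun x hx y hy hj => hP.2 x hx y hy (hcol hx.2 hy.2 hj)⟩)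

theorem Vm_prod {s t : Set ℕ} (hSB : Set.MapsTo Prod.fst SB t) : Vm (s ×ˢ t) SB = s ×ˢ SB :=
  Set.ext fun _ => ⟨fun h => ⟨h.1.1, h.2⟩, fun h => ⟨⟨h.1, hSB h.2⟩, h.2⟩⟩

theorem fiberPartition_prod_notMem_classR {s : Set ℕ} (hs : s.Nonempty) (hSB : SB.Nontrivial)
    (hf : ∀ i, Function.Injective fun b => f (i, b)) :
    fiberPartition (s ×ˢ SB) f ∉ classR (s ×ˢ SB) := by
  obtain ⟨i, hi⟩ := hs
  obtain ⟨b, hb, b', hb', hne⟩ := hSB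
  intro h
  exact hne (hf i (fiberPartition_mem_classR_iff.1 h (i, b) ⟨hi, hb⟩ (i, b') ⟨hi, hb'⟩ rfl))

theorem fiberPartition_prod_notMem_classB {s : Set ℕ} (hs : s.Nontrivial) (hSB : SB.Nonempty)
    (hf : ∀ b, Function.Injective fun i => f (i, b)) :
    fiberPartition (s ×ˢ SB) f ∉ classB (s ×ˢ SB) := by
  obtain ⟨i, hi, i', hi', hne⟩ := hs
  obtain ⟨b, hb⟩ := hSB
  intro h
  exact hne (hf b (fiberPartition_mem_classB_iff.1 h (i, b) ⟨hi, hb⟩ (i', b) ⟨hi', hb⟩ rfl))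

end Parallelizations

theorem dense_times_diag_examples_general {s t : Set ℕ} {SB : Set (ℕ × ℕ)}
    (hs : s.Nontrivial) (hSB : SB.Nontrivial) (hSBt : Set.MapsTo Prod.fst SB t)
    (hrow : Set.InjOn Prod.fst SB) (hcol : Set.InjOn Prod.snd SB)
    {V : Set (ℕ × ℕ × ℕ)} (hV : V = Vm (s ×ˢ t) SB) :
    V = s ×ˢ SB ∧
    {p | ∃ x ∈ V, p = {x}} ∈ ((classA V ∩ classC V) \ classB V) \ classR V ∧
    (fun b => s ×ˢ {b}) '' SB ∈ (classA V ∩ classB V ∩ classC V ∩ classL V) \ classR V := by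
  have hprod : V = s ×ˢ SB := hV.trans (Vm_prod hSBt)
  have hA : classA V = classF V := hV ▸ classA_Vm_eq_classF hrow
  have hC : classC V = classF V := hV ▸ classC_Vm_eq_classF hcol
  have hL : classL V = classB V := hV ▸ classL_Vm_eq_classB hcol
  rw [hA, hC, hL, ← fiberPartition_id, ← fiberPartition_prod_snd hs.nonempty, ← hprod]
  have hid := isPartition_fiberPartition V id
  have hsnd := isPartition_fiberPartition V Prod.snd
  have hsndB : fiberPartition V Prod.snd ∈ classB V :=
    fiberPartition_mem_classB_iff.2 fun _ _ _ _ h => h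
  refine ⟨rfl, ⟨⟨⟨hid, hid⟩, ?_⟩, ?_⟩, ⟨⟨⟨hsnd, hsndB⟩, hsnd⟩, hsndB⟩, ?_⟩ <;> rw [hprod]
  · exact fiberPartition_prod_notMem_classB hs hSB.nonempty (Prod.mk_left_injective ·)
  · exact fiberPartition_prod_notMem_classR hs.nonempty hSB (Prod.mk_right_injective ·)
  · exact fiberPartition_prod_notMem_classR hs.nonempty hSB fun _ => Function.injective_id

theorem Icc_one_two_eq_pair : Set.Icc 1 2 = ({1, 2} : Set ℕ) := by
  ext n
  simp only [Set.mem_Icc, Set.mem_insert_iff, Set.mem_singleton_iff]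
  omega

/-- The SpGEMM instance with `S_A = [2]×[2]` (dense) and
`S_B = {(1,1),(2,2)}` (diagonal): (a) the singleton partition belongs to
`((𝒜 ∩ 𝒞) \ ℬ) \ ℛ`; (b) the partition into the fibers over `(k,j) ∈ S_B`
belongs to `(𝒜 ∩ ℬ ∩ 𝒞 ∩ ℒ) \ ℛ`. -/
theorem dense_times_diag_examples
    (SA SB : Set (ℕ × ℕ))
    (hSA : SA = Set.Icc 1 2 ×ˢ Set.Icc 1 2)
    (hSB : SB = {(1, 1), (2, 2)})
    (V : Set (ℕ × ℕ × ℕ)) (hV : V = Vm SA SB)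
    (Psing P2 : Set (Set (ℕ × ℕ × ℕ)))
    (hPsing : Psing = {p | ∃ t ∈ V, p = {t}})
    (hP2 : P2 = {{(1, 1, 1), (2, 1, 1)}, {(1, 2, 2), (2, 2, 2)}}) :
    V = {(1, 1, 1), (2, 1, 1), (1, 2, 2), (2, 2, 2)} ∧
    Psing ∈ ((classA V ∩ classC V) \ classB V) \ classR V ∧
    P2 ∈ (classA V ∩ classB V ∩ classC V ∩ classL V) \ classR V := by
  subst hSA hSB hPsing hP2
  have main := dense_times_diag_examples_general (s := Set.Icc 1 2) (t := Set.Icc 1 2)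
    (SB := {(1, 1), (2, 2)}) ⟨1, by simp, 2, by simp, by simp⟩ (Set.nontrivial_pair (by simp))
    (by simp [Set.MapsTo]) (by simp [Set.InjOn]) (by simp [Set.InjOn]) hV
  simpa only [Icc_one_two_eq_pair, Set.image_pair, Set.prod_insert, Set.prod_singleton,
    Set.insert_union, Set.singleton_union] using main
end

section
/- Let (V,E) be any member of the SpGEMM DAG family 𝒢(A,B), let U ⊆ V, and let D be any dominator set of U. Then |D| ≥ max( |{(i,k) ∈ S_A : ∃j, v_{ikj} ∈ U}| , |{(k,j) ∈ S_B : ∃i, v_{ikj} ∈ U}| ). -/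
/-- The nonzero structure `S_C` of the output matrix. -/
def SC (SA SB : Set (ℕ × ℕ)) : Set (ℕ × ℕ) :=
  {p | ∃ k, (p.1, k) ∈ SA ∧ (k, p.2) ∈ SB}

/-- A member of the SpGEMM DAG family `𝒢(A,B)`: a finite DAG whose vertices are
the pairwise distinct input vertices `v^A_{ik}` (`(i,k) ∈ S_A`) and `v^B_{kj}`
(`(k,j) ∈ S_B`), the multiplication vertices `v_{ikj}` (`(i,k,j) ∈ V^m`), and
the vertices of a summation tree `T_{ij}` for each `(i,j) ∈ S_C`; each `T_{ij}`
is a finite directed tree oriented toward a single root `root (i,j)`, whose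
leaves (zero-indegree vertices) are exactly the multiplication vertices
`v_{ikj}`, and whose non-leaf vertices are distinct from the vertices of every
other tree and from all input and multiplication vertices.  The edges are the
input edges `(v^A_{ik}, v_{ikj})` and `(v^B_{kj}, v_{ikj})` for
`(i,k,j) ∈ V^m` together with all summation-tree edges. -/
structure SpGEMMDag (SA SB : Set (ℕ × ℕ)) where
  /-- the vertex type -/
  V : Type
  /-- the DAG is finite -/
  finV : Finite V
  /-- the edge relation -/
  E : V → V → Prop
  /-- input vertices `v^A_{ik}` -/
  vA : ℕ × ℕ → V
  /-- input vertices `v^B_{kj}` -/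
  vB : ℕ × ℕ → V
  /-- multiplication vertices `v_{ikj}` -/
  vm : ℕ × ℕ × ℕ → V
  /-- vertex set of the summation tree `T_{ij}` -/
  tree : ℕ × ℕ → Set V
  /-- edge relation of the summation tree `T_{ij}` -/
  treeE : ℕ × ℕ → V → V → Prop
  /-- root of the summation tree `T_{ij}` -/
  root : ℕ × ℕ → V
  /-- the graph is acyclic -/
  acyclic : ∀ v : V, ¬ Relation.TransGen E v v
  /-- the `v^A` vertices are pairwise distinct -/
  vA_inj : Set.InjOn vA SA
  /-- the `v^B` vertices are pairwise distinct -/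
  vB_inj : Set.InjOn vB SB
  /-- the multiplication vertices are pairwise distinct -/
  vm_inj : Set.InjOn vm (Vm SA SB)
  /-- the `v^A` and `v^B` vertices are distinct -/
  vA_ne_vB : ∀ p ∈ SA, ∀ q ∈ SB, vA p ≠ vB q
  /-- input vertices `v^A` do not lie in any summation tree -/
  vA_notin_tree : ∀ p ∈ SA, ∀ q ∈ SC SA SB, vA p ∉ tree q
  /-- input vertices `v^B` do not lie in any summation tree -/
  vB_notin_tree : ∀ p ∈ SB, ∀ q ∈ SC SA SB, vB p ∉ tree q
  /-- distinct summation trees are vertex-disjoint -/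
  trees_disjoint : ∀ p ∈ SC SA SB, ∀ q ∈ SC SA SB, p ≠ q → Disjoint (tree p) (tree q)
  /-- `v_{ikj}` is a vertex of `T_{ij}` -/
  vm_mem_tree : ∀ t ∈ Vm SA SB, vm t ∈ tree (t.1, t.2.2)
  /-- `v_{ikj}` lies in no tree other than `T_{ij}` -/
  vm_mem_tree_only : ∀ t ∈ Vm SA SB, ∀ p ∈ SC SA SB, vm t ∈ tree p → p = (t.1, t.2.2)
  /-- every vertex is an input vertex or a summation-tree vertex (multiplication
  vertices are the leaves of the summation trees) -/
  vertex_cases : ∀ v : V, (∃ p ∈ SA, v = vA p) ∨ (∃ p ∈ SB, v = vB p) ∨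
      (∃ p ∈ SC SA SB, v ∈ tree p)
  /-- the root of `T_{ij}` is a vertex of `T_{ij}` -/
  root_mem : ∀ p ∈ SC SA SB, root p ∈ tree p
  /-- tree edges join vertices of their tree -/
  treeE_mem : ∀ p u v, treeE p u v → p ∈ SC SA SB ∧ u ∈ tree p ∧ v ∈ tree p
  /-- all tree edges are oriented toward the root: every non-root tree vertex
  has exactly one outgoing tree edge -/
  succ_unique : ∀ p ∈ SC SA SB, ∀ u ∈ tree p, u ≠ root p → ∃! v, treeE p u v
  /-- the root has no outgoing tree edge -/
  root_no_succ : ∀ p ∈ SC SA SB, ∀ v, ¬ treeE p (root p) v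
  /-- the zero-indegree vertices (leaves) of `T_{ij}` are exactly the
  multiplication vertices `v_{ikj}` -/
  leaves_iff : ∀ p ∈ SC SA SB, ∀ v ∈ tree p,
      ((∀ u, ¬ treeE p u v) ↔ ∃ k, (p.1, k, p.2) ∈ Vm SA SB ∧ v = vm (p.1, k, p.2))
  /-- the edge set consists exactly of the input edges and the tree edges -/
  edge_iff : ∀ u v, E u v ↔
      ((∃ t ∈ Vm SA SB, (u = vA (t.1, t.2.1) ∨ u = vB (t.2.1, t.2.2)) ∧ v = vm t) ∨
       (∃ p, treeE p u v))

/-- An input of the DAG: a vertex with no incoming edges. -/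
def SpGEMMDag.IsInput {SA SB : Set (ℕ × ℕ)} (G : SpGEMMDag SA SB) (v : G.V) : Prop :=
  ∀ u, ¬ G.E u v

/-- `D` is a dominator set of `U`: every directed path from an input to a
vertex of `U` contains a vertex of `D`. -/
def SpGEMMDag.IsDominator {SA SB : Set (ℕ × ℕ)} (G : SpGEMMDag SA SB)
    (U D : Set G.V) : Prop :=
  ∀ (a : G.V) (l : List G.V), List.Chain G.E a l → G.IsInput a →
    (a :: l).getLast (List.cons_ne_nil a l) ∈ U → ∃ d ∈ D, d ∈ a :: l

/-- The minimum set of `U`: elements of `U` with no successor in `U`. -/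
def SpGEMMDag.minSet {SA SB : Set (ℕ × ℕ)} (G : SpGEMMDag SA SB)
    (U : Set G.V) : Set G.V :=
  {u ∈ U | ∀ v, G.E u v → v ∉ U}

/-!
If `v_{ikj} ∈ U` for some `j`, then `U` is reached from the input `v^A_{ik}` by a single edge.
Choosing one such `j` per index `(i, k)` gives two-vertex paths from inputs to `U` that are pairwise
vertex-disjoint, and a dominator set spends a separate vertex on each of them (the easy half of
Menger's theorem). The same argument applies to the inputs `v^B_{kj}`.
-/

theorem encard_le_encard_of_pairwiseDisjoint_of_inter_nonempty {ι α : Type*} {S : Set ι}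
    {D : Set α} {A : ι → Set α} (hA : S.PairwiseDisjoint A)
    (hDA : ∀ i ∈ S, (D ∩ A i).Nonempty) : S.encard ≤ D.encard := by
  have hpick : ∀ i : S, ∃ d : D, (d : α) ∈ A i := fun i =>
    let ⟨d, hdD, hdA⟩ := hDA i i.2
    ⟨⟨d, hdD⟩, hdA⟩
  choose f hfA using hpick
  have hf : Function.Injective f := fun i j hij =>
    Subtype.ext <| hA.elim_set i.2 j.2 (f i) (hfA i) (hij ▸ hfA j)
  exact Function.Embedding.encard_le ⟨f, hf⟩

namespace SpGEMMDag

variable {SA SB : Set (ℕ × ℕ)} {G : SpGEMMDag SA SB} {U D : Set G.V}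

theorem IsDominator.ncard_le_of_pairwiseDisjoint_paths {ι : Type*} {S : Set ι}
    {a : ι → G.V} {l : ι → List G.V} (hD : G.IsDominator U D)
    (hdisj : S.PairwiseDisjoint fun i => {v | v ∈ a i :: l i})
    (hpath : ∀ i ∈ S, List.IsChain G.E (a i :: l i)) (ha : ∀ i ∈ S, G.IsInput (a i))
    (hU : ∀ i ∈ S, (a i :: l i).getLast (List.cons_ne_nil _ _) ∈ U) : S.ncard ≤ D.ncard :=
  have := G.finV
  have hle : S.encard ≤ D.encard := encard_le_encard_of_pairwiseDisjoint_of_inter_nonempty hdisj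
    fun i hi => hD (a i) (l i) (hpath i hi) (ha i hi) (hU i hi)
  ENat.toNat_le_toNat hle D.toFinite.encard_lt_top.ne

theorem IsDominator.ncard_le_of_matching {ι : Type*} {S : Set ι} {x y : ι → G.V}
    (hD : G.IsDominator U D) (hx : S.InjOn x) (hy : S.InjOn y)
    (hinput : ∀ i ∈ S, G.IsInput (x i)) (hE : ∀ i ∈ S, G.E (x i) (y i))
    (hU : ∀ i ∈ S, y i ∈ U) : S.ncard ≤ D.ncard := by
  have hxy : ∀ i ∈ S, ∀ j ∈ S, x i ≠ y j := fun i hi j hj h =>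
    hinput i hi (x j) (h ▸ hE j hj)
  refine hD.ncard_le_of_pairwiseDisjoint_paths (l := fun i => [y i]) ?_
    (fun i hi => List.isChain_pair.2 (hE i hi)) hinput hU
  intro i hi j hj hij
  refine Set.disjoint_left.2 fun v hvi hvj => ?_
  simp only [Set.mem_ofPred_eq, List.mem_cons, List.not_mem_nil, or_false] at hvi hvj
  rcases hvi with rfl | rfl <;> rcases hvj with h | h
  · exact hij (hx hi hj h)
  · exact hxy i hi j hj h
  · exact hxy j hj i hi h.symm
  · exact hij (hy hi hj h)

theorem isInput_of_forall_notMem_tree {v : G.V} (hv : ∀ p ∈ SC SA SB, v ∉ G.tree p) :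
    G.IsInput v := by
  intro u huv
  rcases (G.edge_iff u v).1 huv with ⟨t, ht, -, rfl⟩ | ⟨p, hp⟩
  · exact hv (t.1, t.2.2) ⟨t.2.1, ht⟩ (G.vm_mem_tree t ht)
  · obtain ⟨hpC, -, hvp⟩ := G.treeE_mem p u v hp
    exact hv p hpC hvp

theorem isInput_vA {p : ℕ × ℕ} (hp : p ∈ SA) : G.IsInput (G.vA p) :=
  isInput_of_forall_notMem_tree (G.vA_notin_tree p hp)

theorem isInput_vB {q : ℕ × ℕ} (hq : q ∈ SB) : G.IsInput (G.vB q) :=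
  isInput_of_forall_notMem_tree (G.vB_notin_tree q hq)

theorem edge_vA_vm {t : ℕ × ℕ × ℕ} (ht : t ∈ Vm SA SB) : G.E (G.vA (t.1, t.2.1)) (G.vm t) :=
  (G.edge_iff _ _).2 (Or.inl ⟨t, ht, Or.inl rfl, rfl⟩)

theorem edge_vB_vm {t : ℕ × ℕ × ℕ} (ht : t ∈ Vm SA SB) : G.E (G.vB (t.2.1, t.2.2)) (G.vm t) :=
  (G.edge_iff _ _).2 (Or.inl ⟨t, ht, Or.inr rfl, rfl⟩)

theorem IsDominator.ncard_vA_indices_le (hD : G.IsDominator U D) :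
    {p ∈ SA | ∃ j, (p.1, p.2, j) ∈ Vm SA SB ∧ G.vm (p.1, p.2, j) ∈ U}.ncard ≤ D.ncard := by
  set S := {p ∈ SA | ∃ j, (p.1, p.2, j) ∈ Vm SA SB ∧ G.vm (p.1, p.2, j) ∈ U}
  have hSA : S ⊆ SA := fun _ hp => hp.1
  have hS : ∀ p ∈ S, ∃ j, (p.1, p.2, j) ∈ Vm SA SB ∧ G.vm (p.1, p.2, j) ∈ U := fun _ hp => hp.2
  choose! j hVm hU using hS
  have hinj : S.InjOn fun p => G.vm (p.1, p.2, j p) := fun p hp q hq h => by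
    have ht := G.vm_inj (hVm p hp) (hVm q hq) h
    simp only [Prod.mk.injEq] at ht
    exact Prod.ext ht.1 ht.2.1
  exact hD.ncard_le_of_matching (G.vA_inj.mono hSA) hinj
    (fun p hp => isInput_vA (hSA hp)) (fun p hp => edge_vA_vm (hVm p hp)) hU

theorem IsDominator.ncard_vB_indices_le (hD : G.IsDominator U D) :
    {q ∈ SB | ∃ i, (i, q.1, q.2) ∈ Vm SA SB ∧ G.vm (i, q.1, q.2) ∈ U}.ncard ≤ D.ncard := by
  set S := {q ∈ SB | ∃ i, (i, q.1, q.2) ∈ Vm SA SB ∧ G.vm (i, q.1, q.2) ∈ U}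
  have hSB : S ⊆ SB := fun _ hq => hq.1
  have hS : ∀ q ∈ S, ∃ i, (i, q.1, q.2) ∈ Vm SA SB ∧ G.vm (i, q.1, q.2) ∈ U := fun _ hq => hq.2
  choose! i hVm hU using hS
  have hinj : S.InjOn fun q => G.vm (i q, q.1, q.2) := fun p hp q hq h =>
    congrArg Prod.snd (G.vm_inj (hVm p hp) (hVm q hq) h)
  exact hD.ncard_le_of_matching (G.vB_inj.mono hSB) hinj
    (fun q hq => isInput_vB (hSB hq)) (fun q hq => edge_vB_vm (hVm q hq)) hU

end SpGEMMDag

/-- For any member `(V,E)` of `𝒢(A,B)`, any `U ⊆ V`, and any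
dominator set `D` of `U`:
`|D| ≥ max(|{(i,k) ∈ S_A : ∃j, v_{ikj} ∈ U}|, |{(k,j) ∈ S_B : ∃i, v_{ikj} ∈ U}|)`. -/
theorem dominator_lower_bound
    (SA SB : Set (ℕ × ℕ)) (G : SpGEMMDag SA SB)
    (U D : Set G.V) (hD : G.IsDominator U D) :
    max ({p ∈ SA | ∃ j, (p.1, p.2, j) ∈ Vm SA SB ∧ G.vm (p.1, p.2, j) ∈ U}.ncard)
        ({q ∈ SB | ∃ i, (i, q.1, q.2) ∈ Vm SA SB ∧ G.vm (i, q.1, q.2) ∈ U}.ncard)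
      ≤ D.ncard :=
  max_le hD.ncard_vA_indices_le hD.ncard_vB_indices_le
end

section
/- Let (V,E) be any member of the SpGEMM DAG family 𝒢(A,B) and let U ⊆ V. Let M_U = {u ∈ U : no out-neighbor (successor) of u in (V,E) lies in U} be the minimum set of U. Then |M_U| ≥ |{(i,j) ∈ S_C : ∃k, v_{ikj} ∈ U}|. -/
/-!
Every edge leaving a vertex of a summation tree stays in that tree, so a vertex of `U ∩ T_{ij}` with
no successor in `U ∩ T_{ij}` has no successor in `U` either. As the DAG is finite and acyclic, such
a vertex exists as soon as `U` meets `T_{ij}`. The trees are pairwise disjoint, so different pairs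
`(i,j)` yield different elements of the minimum set.
-/

section Relation

variable {α ι : Type*} {r : α → α → Prop} {s t : Set α}

theorem wellFounded_swap_of_acyclic [Finite α] (h : ∀ a, ¬ Relation.TransGen r a a) :
    WellFounded (Function.swap r) := by
  have : Std.Irrefl (Relation.TransGen (Function.swap r)) :=
    ⟨fun a ha => h a (Relation.transGen_swap.1 ha)⟩
  exact Subrelation.wf Relation.TransGen.single
    (Finite.wellFounded_of_trans_of_irrefl (Relation.TransGen (Function.swap r)))

/-- The sinks of the subgraph induced by `r` on `s`. This is the minimum set of `s` when `r` is the
edge relation of a DAG. -/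
def sinksIn (r : α → α → Prop) (s : Set α) : Set α :=
  {a ∈ s | ∀ b, r a b → b ∉ s}

theorem sinksIn_nonempty (hr : WellFounded (Function.swap r)) (hs : s.Nonempty) :
    (sinksIn r s).Nonempty := by
  obtain ⟨a, ha, hmin⟩ := hr.has_min s hs
  exact ⟨a, ha, fun b hab hb => hmin b hb hab⟩

theorem sinksIn_inter_of_forall_mem (ht : ∀ a ∈ t, ∀ b, r a b → b ∈ t) :
    sinksIn r (s ∩ t) = sinksIn r s ∩ t := by
  ext a
  constructor
  · rintro ⟨⟨has, hat⟩, hsink⟩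
    exact ⟨⟨has, fun b hab hbs => hsink b hab ⟨hbs, ht a hat b hab⟩⟩, hat⟩
  · rintro ⟨⟨has, hsink⟩, hat⟩
    exact ⟨⟨has, hat⟩, fun b hab hb => hsink b hab hb.1⟩

theorem encard_le_encard_of_pairwiseDisjoint {I : Set ι} {f : ι → Set α}
    (hf : I.PairwiseDisjoint f) (hs : ∀ i ∈ I, (s ∩ f i).Nonempty) : I.encard ≤ s.encard := by
  choose g hgs hgf using hs
  let e : I ↪ s :=
    { toFun := fun i => ⟨g i i.2, hgs i i.2⟩
      inj' := fun i j hij => Subtype.ext <| hf.elim_set i.2 j.2 (g i i.2) (hgf i i.2) <|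
        Subtype.mk.inj hij ▸ hgf j j.2 }
  exact e.encard_le

theorem encard_le_encard_sinksIn (hr : WellFounded (Function.swap r)) {I : Set ι} {f : ι → Set α}
    (hdisj : I.PairwiseDisjoint f) (hclosed : ∀ i ∈ I, ∀ a ∈ f i, ∀ b, r a b → b ∈ f i)
    (hs : ∀ i ∈ I, (s ∩ f i).Nonempty) : I.encard ≤ (sinksIn r s).encard :=
  encard_le_encard_of_pairwiseDisjoint hdisj fun i hi =>
    sinksIn_inter_of_forall_mem (hclosed i hi) ▸ sinksIn_nonempty hr (hs i hi)

end Relation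

namespace SpGEMMDag

variable {SA SB : Set (ℕ × ℕ)} (G : SpGEMMDag SA SB)

theorem pairwiseDisjoint_tree : (SC SA SB).PairwiseDisjoint G.tree :=
  fun p hp q hq => G.trees_disjoint p hp q hq

theorem mem_tree_of_edge {p : ℕ × ℕ} (hp : p ∈ SC SA SB) {u v : G.V} (hu : u ∈ G.tree p)
    (huv : G.E u v) : v ∈ G.tree p := by
  rcases (G.edge_iff u v).1 huv with ⟨t, ht, rfl | rfl, -⟩ | ⟨q, hq⟩
  · exact absurd hu (G.vA_notin_tree _ ht.1 p hp)
  · exact absurd hu (G.vB_notin_tree _ ht.2 p hp)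
  · obtain ⟨hqC, huq, hvq⟩ := G.treeE_mem q u v hq
    obtain rfl : p = q := G.pairwiseDisjoint_tree.elim_set hp hqC u hu huq
    exact hvq

end SpGEMMDag

theorem minimum_set_lower_bound_general {SA SB : Set (ℕ × ℕ)} (G : SpGEMMDag SA SB) (U : Set G.V) :
    {p ∈ SC SA SB | (U ∩ G.tree p).Nonempty}.encard ≤ (G.minSet U).encard :=
  have := G.finV
  encard_le_encard_sinksIn (wellFounded_swap_of_acyclic G.acyclic)
    (G.pairwiseDisjoint_tree.subset (Set.sep_subset _ _))
    (fun _ hp _ hu _ huv => G.mem_tree_of_edge hp.1 hu huv) (fun _ hp => hp.2)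

/-- For any member `(V,E)` of `𝒢(A,B)` and any `U ⊆ V`, the
minimum set `M_U` of `U` satisfies
`|M_U| ≥ |{(i,j) ∈ S_C : ∃k, v_{ikj} ∈ U}|`. -/
theorem minimum_set_lower_bound
    (SA SB : Set (ℕ × ℕ)) (G : SpGEMMDag SA SB) (U : Set G.V) :
    ({p ∈ SC SA SB | ∃ k, (p.1, k, p.2) ∈ Vm SA SB ∧ G.vm (p.1, k, p.2) ∈ U}.ncard)
      ≤ (G.minSet U).ncard := by
  have := G.finV
  have hsub : {p ∈ SC SA SB | ∃ k, (p.1, k, p.2) ∈ Vm SA SB ∧ G.vm (p.1, k, p.2) ∈ U} ⊆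
      {p ∈ SC SA SB | (U ∩ G.tree p).Nonempty} :=
    fun p ⟨hp, k, hk, hkU⟩ => ⟨hp, _, hkU, G.vm_mem_tree _ hk⟩
  exact ENat.toNat_le_toNat
    ((Set.encard_le_encard hsub).trans (minimum_set_lower_bound_general G U))
    (G.minSet U).toFinite.encard_lt_top.ne
end
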